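/- Let G be a directed graph, v a vertex of G, and E(v) the set of all edges of G incident at v. The following are equivalent: (1) there is no directed cycle in G containing v; (2) ℤ[E(v)]/(I(G) ∩ ℤ[E(v)]) is finitely generated as a ℤ-module; (3) there is an integer n ≥ 1 such that x^n ∈ I(G) for every x ∈ E(v); (4) the Krull dimension of ℤ[E(v)]/(I(G) ∩ ℤ[E(v)]) equals 1; (5) the Krull dimension of ℚ[E(v)]/(I_ℚ(G) ∩ ℚ[E(v)]) equals 0. -/

import Mathlib

open MvPolynomial

/-- The `l`-th elementary symmetric polynomial in the finite set `s` of variables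
(`1` for `l = 0`, `0` for `l > |s|`). -/
noncomputable def esymmOf (R : Type) [CommRing R] {E : Type} (s : Finset E) (l : ℕ) :
    MvPolynomial E R :=
  ∑ t ∈ s.powersetCard l, ∏ x ∈ t, X x

/-- The incidence ideal of the directed graph with edge-endpoint maps `src`, `tgt`:
the ideal generated by the incidence relations
`δ_{v,l} = e_l(edges out of v) - e_l(edges into v)` for all vertices `v` and all `l ≥ 1`
(for `l > k_v` the relation `δ_{v,l}` is the zero polynomial, so this ideal is generated by
the `δ_{v,l}` with `1 ≤ l ≤ k_v`). -/
noncomputable def incidenceIdeal (R : Type) [CommRing R] {V E : Type}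
    [Fintype E] [DecidableEq V] (src tgt : E → V) : Ideal (MvPolynomial E R) :=
  Ideal.span {f | ∃ (v : V) (l : ℕ), 1 ≤ l ∧
    f = esymmOf R (Finset.univ.filter fun x => src x = v) l
      - esymmOf R (Finset.univ.filter fun x => tgt x = v) l}

/-- A directed cycle in the directed graph with edge-endpoint maps `src`, `tgt`:
pairwise distinct vertices `v_0, …, v_n` and edges `x_0, …, x_n` with `x_i` going
from `v_i` to `v_{i+1}` (indices mod `n+1`). -/
structure DirCycle {V E : Type} (src tgt : E → V) where
  n : ℕ
  vtx : ZMod (n + 1) → V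
  edge : ZMod (n + 1) → E
  vtx_inj : Function.Injective vtx
  edge_src : ∀ i, src (edge i) = vtx i
  edge_tgt : ∀ i, tgt (edge i) = vtx (i + 1)

/-- `C` is the set of edges of a directed cycle.  (A directed cycle, considered up to
cyclic permutation, is uniquely determined by its set of edges.) -/
def IsCycle {V E : Type} (src tgt : E → V) (C : Set E) : Prop :=
  ∃ c : DirCycle src tgt, C = Set.range c.edge

/-
A ring homomorphism `φ` kills the incidence ideal if and only if, at each vertex, the products of
the polynomials `1 + φ(x) T` over the outgoing and over the incoming edges agree. When the values
lie in a field, comparing roots shows that for each `c ≠ 0` the set of edges `x` with `φ(x) = c` is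
balanced: it has as many edges out of each vertex as into it. Every edge of a balanced set lies on
a directed cycle. Hence, if no directed cycle contains `v`, the edges at `v` vanish at every point
of the incidence scheme, so they are nilpotent modulo the incidence ideal. Then
`R[E(v)] / (I(G) ∩ R[E(v)])` is finite over `R`, and it has the Krull dimension of `R` because the
constant coefficient maps it back onto `R`.

Conversely, the edge set of a directed cycle is balanced, so sending its edges to an indeterminate
`T` and all other edges to `0` kills the incidence ideal. If the cycle passes through `v`, this
yields a surjection from `R[E(v)] / (I(G) ∩ R[E(v)])` onto `R[T]`, whose Krull dimension is larger
than that of `R`.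
-/

section SimplePaths

variable {α : Type*} {r : α → α → Prop} {a b : α}

theorem exists_injOn_of_reflTransGen (h : Relation.ReflTransGen r a b) :
    ∃ (n : ℕ) (p : ℕ → α), p 0 = a ∧ p n = b ∧ (∀ i < n, r (p i) (p (i + 1))) ∧
      Set.InjOn p (Set.Iic n) := by
  induction h with
  | refl => exact ⟨0, fun _ => a, rfl, rfl, by simp, fun i hi j hj _ => by simp_all⟩
  | @tail b c _ hbc ih =>
    obtain ⟨n, p, h0, hn, hp, hinj⟩ := ih
    by_cases hc : ∃ k ≤ n, p k = c
    · obtain ⟨k, hkn, hk⟩ := hc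
      exact ⟨k, p, h0, hk, fun i hi => hp i (hi.trans_le hkn),
        hinj.mono (Set.Iic_subset_Iic.mpr hkn)⟩
    · have hupd : ∀ i ≤ n, Function.update p (n + 1) c i = p i := fun i hi =>
        Function.update_of_ne (by lia) _ _
      refine ⟨n + 1, Function.update p (n + 1) c, by rw [hupd 0 n.zero_le, h0], by simp, ?_, ?_⟩
      · intro i hi
        rcases Nat.lt_succ_iff_lt_or_eq.mp hi with hi | rfl
        · rw [hupd i hi.le, hupd (i + 1) hi]
          exact hp i hi
        · rwa [hupd i le_rfl, Function.update_self, hn]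
      · intro i hi j hj hij
        simp only [Set.mem_Iic] at hi hj
        rcases hi.lt_or_eq with hi | rfl <;> rcases hj.lt_or_eq with hj | rfl
        · rw [hupd i (by lia), hupd j (by lia)] at hij
          exact hinj (Nat.le_of_lt_succ hi) (Nat.le_of_lt_succ hj) hij
        · rw [hupd i (by lia), Function.update_self] at hij
          exact (hc ⟨i, by lia, hij⟩).elim
        · rw [hupd j (by lia), Function.update_self] at hij
          exact (hc ⟨j, by lia, hij.symm⟩).elim
        · rfl

theorem exists_injective_cycle_of_transGen (h : Relation.TransGen r a a) :
    ∃ (n : ℕ) (p : Fin (n + 1) → α), p 0 = a ∧ Function.Injective p ∧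
      ∀ i, r (p i) (p (i + 1)) := by
  obtain ⟨b, hab, hba⟩ := Relation.TransGen.tail'_iff.mp h
  obtain ⟨n, p, h0, hn, hp, hinj⟩ := exists_injOn_of_reflTransGen hab
  refine ⟨n, fun i => p i, h0, fun i j hij => Fin.ext (hinj i.is_le j.is_le hij), fun i => ?_⟩
  dsimp only
  rw [Fin.val_add_one]
  split_ifs with hi
  · subst hi
    rwa [Fin.val_last, hn, h0]
  · exact hp i (Fin.val_lt_last hi)

end SimplePaths

section Graph

variable {V E : Type} {src tgt : E → V}

/-- The adjacency relation of the directed graph with edge-endpoint maps `src`, `tgt`. Its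
transitive closure is reachability by directed walks of positive length. -/
def IsArc (src tgt : E → V) (a b : V) : Prop :=
  ∃ e, src e = a ∧ tgt e = b

/-- A finite set of edges is balanced if every vertex is the initial vertex of as many of its
edges as it is the terminal vertex of. Encoded as an equality of multisets of endpoints, so that
edges can be counted over an arbitrary set of vertices at once. -/
def IsBalanced (src tgt : E → V) (S : Finset E) : Prop :=
  S.val.map src = S.val.map tgt

/-- The vertex `v` lies on a directed cycle. -/
abbrev LiesOnCycle (src tgt : E → V) (v : V) : Prop :=
  ∃ C : Set E, IsCycle src tgt C ∧ v ∈ src '' C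

/-- The set `E(v)` of all edges incident at `v`. -/
abbrev edgesAt (src tgt : E → V) (v : V) : Set E :=
  {x | src x = v ∨ tgt x = v}

theorem isBalanced_iff [DecidableEq V] {S : Finset E} :
    IsBalanced src tgt S ↔
      ∀ w, (S.filter fun e => src e = w).card = (S.filter fun e => tgt e = w).card := by
  simp only [IsBalanced, Multiset.ext, Multiset.count_map, Finset.card_def, Finset.filter_val,
    eq_comm]

theorem liesOnCycle_of_transGen {v : V} (h : Relation.TransGen (IsArc src tgt) v v) :
    LiesOnCycle src tgt v := by
  obtain ⟨n, p, rfl, hinj, hp⟩ := exists_injective_cycle_of_transGen h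
  choose edge hsrc htgt using hp
  let c : DirCycle src tgt := ⟨n, p, edge, hinj, hsrc, htgt⟩
  exact ⟨Set.range c.edge, ⟨c, rfl⟩, edge 0, ⟨(0 : Fin (n + 1)), rfl⟩, hsrc 0⟩

theorem IsCycle.isBalanced {S : Finset E} (hS : IsCycle src tgt S) : IsBalanced src tgt S := by
  obtain ⟨c, hc⟩ := hS
  have hinj : Function.Injective c.edge := fun i j hij =>
    c.vtx_inj (by rw [← c.edge_src, ← c.edge_src, hij])
  obtain rfl : S = Finset.univ.map ⟨c.edge, hinj⟩ := Finset.coe_injective (by simp [hc])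
  have hshift : (fun i => c.vtx (i + 1)) = c.vtx ∘ Equiv.addRight 1 := rfl
  simp only [IsBalanced, Finset.map_val, Multiset.map_map, Function.comp_def,
    Function.Embedding.coeFn_mk, c.edge_src, c.edge_tgt]
  rw [hshift, ← Multiset.map_map, Multiset.map_univ_val_equiv]

/- Every edge starting in the set `T` of vertices reachable from `tgt x` also ends in `T`. As `S` is
balanced, no edge of `S` can then enter `T` from outside; in particular `x` starts in `T`. -/
theorem IsBalanced.reflTransGen {S : Finset E} (hS : IsBalanced src tgt S) {x : E} (hx : x ∈ S) :
    Relation.ReflTransGen (IsArc src tgt) (tgt x) (src x) := by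
  classical
  let T : Set V := {w | Relation.ReflTransGen (IsArc src tgt) (tgt x) w}
  have hsub : S.filter (src · ∈ T) ⊆ S.filter (tgt · ∈ T) :=
    Finset.monotone_filter_right S fun e _ he => Relation.ReflTransGen.tail he ⟨e, rfl, rfl⟩
  have hcard : (S.filter (src · ∈ T)).card = (S.filter (tgt · ∈ T)).card := by
    simpa only [Multiset.countP_map, Finset.card_def, Finset.filter_val] using
      congrArg (Multiset.countP (· ∈ T)) hS
  have hxT : x ∈ S.filter (tgt · ∈ T) := Finset.mem_filter.mpr ⟨hx, .refl⟩
  rw [← Finset.eq_of_subset_of_card_le hsub hcard.ge] at hxT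
  exact (Finset.mem_filter.mp hxT).2

theorem IsBalanced.liesOnCycle {S : Finset E} (hS : IsBalanced src tgt S) {x : E} (hx : x ∈ S)
    {v : V} (hv : x ∈ edgesAt src tgt v) : LiesOnCycle src tgt v := by
  have hreach := hS.reflTransGen hx
  have harc : IsArc src tgt (src x) (tgt x) := ⟨x, rfl, rfl⟩
  apply liesOnCycle_of_transGen
  rcases hv with rfl | rfl
  · exact .head' harc hreach
  · exact .tail' hreach harc

end Graph

section GeneratingFunction

variable {ι : Type*} {A : Type*} [CommSemiring A]

/-- The polynomial `∏ i ∈ s, (1 + a i * T)`, the generating function of the elementary symmetric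
functions in the values `a i`. -/
noncomputable def esymmGenFun (s : Finset ι) (a : ι → A) : Polynomial A :=
  ∏ i ∈ s, (1 + Polynomial.C (a i) * Polynomial.X)

theorem coeff_esymmGenFun (s : Finset ι) (a : ι → A) (l : ℕ) :
    (esymmGenFun s a).coeff l = ∑ t ∈ s.powersetCard l, ∏ i ∈ t, a i := by
  simp_rw [esymmGenFun, Finset.prod_one_add, Polynomial.finsetSum_coeff, Finset.prod_mul_distrib,
    Finset.prod_const, ← map_prod, Polynomial.coeff_C_mul_X_pow, Finset.powersetCard_eq_filter,
    Finset.sum_filter, eq_comm]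

theorem esymmGenFun_indicator [DecidableEq ι] (s t : Finset ι) (c : A) :
    esymmGenFun s ((t : Set ι).indicator fun _ => c) =
      (1 + Polynomial.C c * Polynomial.X) ^ (s ∩ t).card := by
  have hfactor (i : ι) :
      1 + Polynomial.C ((t : Set ι).indicator (fun _ => c) i) * Polynomial.X =
        if i ∈ t then 1 + Polynomial.C c * Polynomial.X else 1 := by
    by_cases hi : i ∈ t <;> simp [hi]
  simp_rw [esymmGenFun, hfactor, Finset.prod_ite_mem, Finset.prod_const]

theorem count_roots_esymmGenFun {K : Type*} [Field K] [DecidableEq K] (s : Finset ι) (a : ι → K)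
    {c : K} (hc : c ≠ 0) :
    (esymmGenFun s a).roots.count (-c⁻¹) = (s.filter fun i => a i = c).card := by
  have hne (i : ι) : 1 + Polynomial.C (a i) * Polynomial.X ≠ 0 := fun h => by
    simpa using congrArg (Polynomial.eval 0) h
  have hcount (i : ι) :
      (1 + Polynomial.C (a i) * Polynomial.X).roots.count (-c⁻¹) = if a i = c then 1 else 0 := by
    by_cases h : a i = 0
    · simp [h, hc.symm]
    · rw [add_comm, ← Polynomial.C_1, Polynomial.roots_C_mul_X_add_C 1 h,
        Multiset.count_singleton]
      simp [eq_comm]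
  rw [esymmGenFun, Polynomial.roots_prod _ _ (Finset.prod_ne_zero_iff.mpr fun i _ => hne i),
    Multiset.count_bind, Finset.card_filter]
  exact Finset.sum_congr rfl fun i _ => hcount i

end GeneratingFunction

section IncidenceIdeal

variable {R A V E : Type} [CommRing R] [CommRing A]

theorem map_esymmOf (φ : MvPolynomial E R →+* A) (s : Finset E) (l : ℕ) :
    φ (esymmOf R s l) = (esymmGenFun s fun e => φ (X e)).coeff l := by
  simp only [esymmOf, coeff_esymmGenFun, map_sum, map_prod]

variable [Fintype E] [DecidableEq V] {src tgt : E → V}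

theorem incidenceIdeal_le_ker_iff {φ : MvPolynomial E R →+* A} :
    incidenceIdeal R src tgt ≤ RingHom.ker φ ↔
      ∀ w, esymmGenFun (Finset.univ.filter fun e => src e = w) (fun e => φ (X e)) =
        esymmGenFun (Finset.univ.filter fun e => tgt e = w) fun e => φ (X e) := by
  rw [incidenceIdeal, Ideal.span_le]
  constructor
  · intro h w
    ext l
    rcases l.eq_zero_or_pos with rfl | hl
    · simp only [coeff_esymmGenFun, Finset.powersetCard_zero, Finset.sum_singleton,
        Finset.prod_empty]
    · rw [← map_esymmOf, ← map_esymmOf, ← sub_eq_zero, ← map_sub]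
      exact h ⟨w, l, hl, rfl⟩
  · rintro h _ ⟨w, l, -, rfl⟩
    rw [SetLike.mem_coe, RingHom.mem_ker, map_sub, map_esymmOf, map_esymmOf, h w, sub_self]

theorem incidenceIdeal_le_ker_constantCoeff :
    incidenceIdeal R src tgt ≤ RingHom.ker (constantCoeff (σ := E) (R := R)) :=
  incidenceIdeal_le_ker_iff.mpr fun w => by simp [esymmGenFun]

theorem isBalanced_levelSet {K : Type} [Field K] [DecidableEq K] {φ : MvPolynomial E R →+* K}
    (hφ : incidenceIdeal R src tgt ≤ RingHom.ker φ) {c : K} (hc : c ≠ 0) :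
    IsBalanced src tgt (Finset.univ.filter fun e => φ (X e) = c) := by
  rw [isBalanced_iff]
  intro w
  have hcount := congrArg (fun p => p.roots.count (-c⁻¹)) (incidenceIdeal_le_ker_iff.mp hφ w)
  simp only [count_roots_esymmGenFun _ _ hc] at hcount
  rwa [Finset.filter_comm, Finset.filter_comm (fun e => φ (X e) = c)]

theorem IsBalanced.incidenceIdeal_le_ker [Algebra R A] {S : Finset E}
    (hS : IsBalanced src tgt S) (c : A) :
    incidenceIdeal R src tgt ≤
      RingHom.ker (aeval (R := R) ((S : Set E).indicator fun _ => c)) := by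
  classical
  refine incidenceIdeal_le_ker_iff (φ := (aeval _).toRingHom) |>.mpr fun w => ?_
  simp only [AlgHom.toRingHom_eq_coe, RingHom.coe_coe, aeval_X, esymmGenFun_indicator,
    Finset.filter_inter, Finset.univ_inter, isBalanced_iff.mp hS w]

theorem X_mem_radical_incidenceIdeal {v : V} (hv : ¬ LiesOnCycle src tgt v) {x : E}
    (hx : x ∈ edgesAt src tgt v) : X x ∈ (incidenceIdeal R src tgt).radical := by
  classical
  rw [Ideal.radical_eq_sInf, Ideal.mem_sInf]
  rintro P ⟨hIP, hP⟩
  by_contra hxP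
  let φ := algebraMap (MvPolynomial E R) P.ResidueField
  have hφ : incidenceIdeal R src tgt ≤ RingHom.ker φ := by
    rwa [Ideal.ker_algebraMap_residueField]
  have hφx : φ (X x) ≠ 0 := by
    rwa [Ne, Ideal.algebraMap_residueField_eq_zero]
  exact hv ((isBalanced_levelSet hφ hφx).liesOnCycle (by simp) hx)

theorem IsCycle.incidenceIdeal_le_ker [Algebra R A] {C : Set E} (hC : IsCycle src tgt C) (c : A) :
    incidenceIdeal R src tgt ≤ RingHom.ker (aeval (R := R) (C.indicator fun _ => c)) := by
  lift C to Finset E using C.toFinite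
  exact hC.isBalanced.incidenceIdeal_le_ker c

end IncidenceIdeal

section Nilpotence

theorem exists_forall_pow_mem_of_subset_radical {A : Type*} [CommSemiring A] {I : Ideal A}
    {s : Set A} (hs : s.Finite) (h : s ⊆ I.radical) : ∃ n : ℕ, 1 ≤ n ∧ ∀ a ∈ s, a ^ n ∈ I := by
  obtain ⟨n, hn⟩ :=
    Ideal.exists_pow_le_of_le_radical_of_fg (Ideal.span_le.mpr h) (Submodule.fg_span hs)
  refine ⟨n + 1, Nat.le_add_left 1 n, fun a ha => I.pow_mem_of_pow_mem (hn ?_) n.le_succ⟩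
  exact Ideal.pow_mem_pow (Ideal.subset_span ha) n

theorem finite_quotient_of_X_mem_radical {R σ : Type*} [CommRing R] [Finite σ]
    {J : Ideal (MvPolynomial σ R)} (hJ : ∀ i, X i ∈ J.radical) :
    Module.Finite R (MvPolynomial σ R ⧸ J) := by
  have hX (i : σ) : IsIntegral R (Ideal.Quotient.mk J (X i)) := by
    obtain ⟨n, hn⟩ := hJ i
    refine IsIntegral.of_pow n.succ_pos ?_
    rw [← map_pow, Ideal.Quotient.eq_zero_iff_mem.mpr (J.pow_mem_of_pow_mem hn n.le_succ)]
    exact isIntegral_zero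
  have hint : Algebra.IsIntegral R (MvPolynomial σ R ⧸ J) := by
    refine ⟨fun q => ?_⟩
    obtain ⟨p, rfl⟩ := Ideal.Quotient.mk_surjective q
    induction p using MvPolynomial.induction_on with
    | C a => exact isIntegral_algebraMap (A := MvPolynomial σ R ⧸ J) (x := a)
    | add p q hp hq => exact map_add (Ideal.Quotient.mk J) p q ▸ hp.add hq
    | mul_X p i hp => exact map_mul (Ideal.Quotient.mk J) p (X i) ▸ hp.mul (hX i)
  exact Algebra.IsIntegral.finite

end Nilpotence

section KrullDimension

theorem ringKrullDim_le_of_isIntegral (R A : Type*) [CommRing R] [CommRing A] [Algebra R A]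
    [Algebra.IsIntegral R A] : ringKrullDim A ≤ ringKrullDim R :=
  Order.krullDim_le_of_strictMono (PrimeSpectrum.comap (algebraMap R A))
    fun _ _ h => Ideal.IsIntegral.comap_lt_comap h

theorem ringKrullDim_quotient_eq_of_isIntegral {R σ : Type*} [CommRing R]
    {J : Ideal (MvPolynomial σ R)} (hJ : J ≤ RingHom.ker constantCoeff)
    [Algebra.IsIntegral R (MvPolynomial σ R ⧸ J)] :
    ringKrullDim (MvPolynomial σ R ⧸ J) = ringKrullDim R := by
  refine le_antisymm (ringKrullDim_le_of_isIntegral R _) ?_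
  exact ringKrullDim_le_of_surjective (Ideal.Quotient.lift J constantCoeff fun p hp => hJ hp)
    (Ideal.Quotient.lift_surjective_of_surjective _ _ fun r => ⟨C r, constantCoeff_C _ r⟩)

theorem ringKrullDim_lt_ringKrullDim_polynomial {R : Type*} [CommRing R] [FiniteRingKrullDim R] :
    ringKrullDim R < ringKrullDim (Polynomial R) := by
  refine lt_of_lt_of_le ?_ ringKrullDim_succ_le_ringKrullDim_polynomial
  rw [ringKrullDim, Order.krullDim_eq_length_of_finiteDimensionalOrder]
  exact_mod_cast Nat.lt_succ_self _

theorem ringKrullDim_int : ringKrullDim ℤ = 1 :=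
  IsPrincipalIdealRing.ringKrullDim_eq_one ℤ Int.not_isField

instance : FiniteRingKrullDim ℤ :=
  finiteRingKrullDim_iff_ne_bot_and_top.mpr (by rw [ringKrullDim_int]; decide)

end KrullDimension

section EliminationIdeal

variable {R E : Type*} [CommRing R]

/-- The elimination ideal `I ∩ R[F]` of an ideal `I` of the polynomial ring `R[E]`, for a set `F`
of variables. -/
noncomputable abbrev eliminationIdeal (I : Ideal (MvPolynomial E R)) (F : Set E) :
    Ideal (MvPolynomial F R) :=
  I.comap (rename (Subtype.val : F → E)).toRingHom

theorem X_mem_radical_eliminationIdeal {I : Ideal (MvPolynomial E R)} {F : Set E} {x : F} :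
    X x ∈ (eliminationIdeal I F).radical ↔ X (x : E) ∈ I.radical := by
  rw [← Ideal.comap_radical, Ideal.mem_comap]
  simp

theorem eliminationIdeal_le_ker_constantCoeff {I : Ideal (MvPolynomial E R)}
    (hI : I ≤ RingHom.ker constantCoeff) (F : Set E) :
    eliminationIdeal I F ≤ RingHom.ker constantCoeff := fun p hp => by
  simpa using hI hp

end EliminationIdeal

section IncidenceQuotient

variable {R V E : Type} [CommRing R] [Fintype E] [DecidableEq V] {src tgt : E → V} {F : Set E}

/-- The ring `R[F] / (I(G) ∩ R[F])` of a set `F` of edges of the directed graph `G` with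
edge-endpoint maps `src`, `tgt`. -/
abbrev IncidenceQuotient (R : Type) [CommRing R] (src tgt : E → V) (F : Set E) : Type :=
  MvPolynomial F R ⧸ eliminationIdeal (incidenceIdeal R src tgt) F

theorem finite_incidenceQuotient (hF : ∀ x ∈ F, X x ∈ (incidenceIdeal R src tgt).radical) :
    Module.Finite R (IncidenceQuotient R src tgt F) :=
  finite_quotient_of_X_mem_radical fun x => X_mem_radical_eliminationIdeal.mpr (hF x x.2)

theorem ringKrullDim_incidenceQuotient_of_finite
    [Module.Finite R (IncidenceQuotient R src tgt F)] :
    ringKrullDim (IncidenceQuotient R src tgt F) = ringKrullDim R :=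
  ringKrullDim_quotient_eq_of_isIntegral
    (eliminationIdeal_le_ker_constantCoeff incidenceIdeal_le_ker_constantCoeff F)

theorem IsCycle.exists_surjective_algHom {C : Set E} (hC : IsCycle src tgt C) {x : E}
    (hxC : x ∈ C) (hxF : x ∈ F) :
    ∃ f : IncidenceQuotient R src tgt F →ₐ[R] Polynomial R, Function.Surjective f := by
  let g : MvPolynomial F R →ₐ[R] Polynomial R :=
    (aeval (C.indicator fun _ => Polynomial.X)).comp (rename Subtype.val)
  have hgx : g (X ⟨x, hxF⟩) = Polynomial.X := by simp [g, hxC]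
  have hg : Function.Surjective g := fun q =>
    ⟨Polynomial.aeval (X ⟨x, hxF⟩) q, by
      rw [← Polynomial.aeval_algHom_apply, hgx, Polynomial.aeval_X_left_apply]⟩
  exact ⟨Ideal.Quotient.liftₐ _ g fun p hp => hC.incidenceIdeal_le_ker _ hp,
    Ideal.Quotient.lift_surjective_of_surjective _ _ hg⟩

theorem IsCycle.ringKrullDim_lt [FiniteRingKrullDim R] {C : Set E} (hC : IsCycle src tgt C)
    {x : E} (hxC : x ∈ C) (hxF : x ∈ F) :
    ringKrullDim R < ringKrullDim (IncidenceQuotient R src tgt F) := by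
  obtain ⟨f, hf⟩ := hC.exists_surjective_algHom (R := R) hxC hxF
  exact ringKrullDim_lt_ringKrullDim_polynomial.trans_le
    (ringKrullDim_le_of_surjective f.toRingHom hf)

theorem ringKrullDim_incidenceQuotient_edgesAt_eq_iff [FiniteRingKrullDim R] {v : V} :
    ringKrullDim (IncidenceQuotient R src tgt (edgesAt src tgt v)) = ringKrullDim R ↔
      ¬ LiesOnCycle src tgt v := by
  constructor
  · rintro hdim ⟨C, hC, x, hxC, hxv⟩
    exact (hC.ringKrullDim_lt hxC (.inl hxv)).ne' hdim
  · intro hv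
    have := finite_incidenceQuotient (R := R) fun x => X_mem_radical_incidenceIdeal (x := x) hv
    exact ringKrullDim_incidenceQuotient_of_finite

end IncidenceQuotient

theorem stmt10_general (R S : Type) [CommRing R] [FiniteRingKrullDim R] [CommRing S]
    [FiniteRingKrullDim S] {V E : Type} [Fintype E] [DecidableEq V] (src tgt : E → V) (v : V) :
    List.TFAE
      [¬ LiesOnCycle src tgt v,
       Module.Finite R (IncidenceQuotient R src tgt (edgesAt src tgt v)),
       ∃ n : ℕ, 1 ≤ n ∧ ∀ x ∈ edgesAt src tgt v,
         (X x : MvPolynomial E R) ^ n ∈ incidenceIdeal R src tgt,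
       ringKrullDim (IncidenceQuotient R src tgt (edgesAt src tgt v)) = ringKrullDim R,
       ringKrullDim (IncidenceQuotient S src tgt (edgesAt src tgt v)) = ringKrullDim S] := by
  tfae_have 1 → 3 := fun hv => by
    simpa only [Set.forall_mem_image] using exists_forall_pow_mem_of_subset_radical
      (Set.toFinite (X '' edgesAt src tgt v))
      (Set.image_subset_iff.mpr fun x => X_mem_radical_incidenceIdeal hv)
  tfae_have 3 → 2 := fun ⟨n, _, hn⟩ => finite_incidenceQuotient fun x hx => ⟨n, hn x hx⟩
  tfae_have 2 → 4 := fun _ => ringKrullDim_incidenceQuotient_of_finite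
  tfae_have 4 → 1 := ringKrullDim_incidenceQuotient_edgesAt_eq_iff.mp
  tfae_have 5 ↔ 1 := ringKrullDim_incidenceQuotient_edgesAt_eq_iff
  tfae_finish

theorem stmt10 {V E : Type} [Fintype V] [Fintype E] [DecidableEq V] [DecidableEq E]
    (src tgt : E → V) (v : V) :
    List.TFAE
      [¬ ∃ C : Set E, IsCycle src tgt C ∧ v ∈ src '' C,
       Module.Finite ℤ
         (MvPolynomial {x : E | src x = v ∨ tgt x = v} ℤ ⧸
           Ideal.comap
             (MvPolynomial.rename (Subtype.val : {x : E | src x = v ∨ tgt x = v} → E)).toRingHom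
             (incidenceIdeal ℤ src tgt)),
       ∃ n : ℕ, 1 ≤ n ∧ ∀ x : E, (src x = v ∨ tgt x = v) →
         (X x : MvPolynomial E ℤ) ^ n ∈ incidenceIdeal ℤ src tgt,
       ringKrullDim
         (MvPolynomial {x : E | src x = v ∨ tgt x = v} ℤ ⧸
           Ideal.comap
             (MvPolynomial.rename (Subtype.val : {x : E | src x = v ∨ tgt x = v} → E)).toRingHom
             (incidenceIdeal ℤ src tgt)) = 1,
       ringKrullDim
         (MvPolynomial {x : E | src x = v ∨ tgt x = v} ℚ ⧸
           Ideal.comap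
             (MvPolynomial.rename (Subtype.val : {x : E | src x = v ∨ tgt x = v} → E)).toRingHom
             (incidenceIdeal ℚ src tgt)) = 0] := by
  rw [← ringKrullDim_int, ← ringKrullDim_eq_zero_of_field ℚ]
  exact stmt10_general ℤ ℚ src tgt v
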